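/- Assume J̄ < ∞, J_1 > 0, J is of order α ∈ (0,∞], and p ≥ 1 + 4α′/d, so that ν₀ > 0. If ν > ν₀, then I_ν < 0 and there exists q ∈ ℓ²(Z^d) with M[q] = ν and H[q] = I_ν. Conversely, if 0 < ν < ν₀, then I_ν = 0 and there exists no q ∈ ℓ²(Z^d) with M[q] = ν and H[q] = 0. -/

import Mathlib

open scoped BigOperators
open Filter Topology

noncomputable section

/-- The `ℓ^∞` norm of a lattice point of `ℤ^d`, as a natural number. -/
def latNorm {d : ℕ} (m : Fin d → ℤ) : ℕ := Finset.univ.sup fun i => (m i).natAbs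

/-- The summand `J_{|m|}` for `m ≠ 0` (and `0` for `m = 0`). -/
def JbarSummand (d : ℕ) (J : ℕ → ℝ) (m : Fin d → ℤ) : ℝ :=
  if m = 0 then 0 else J (latNorm m)

/-- `J̄ = Σ_{m ≠ 0} J_{|m|}`. -/
def Jbar (d : ℕ) (J : ℕ → ℝ) : ℝ := ∑' m : Fin d → ℤ, JbarSummand d J m

/-- The quadratic form `⟨Lu,u⟩ = (1/2) Σ_n Σ_{m ≠ n} J_{|n-m|} |u_n - u_m|²`. -/
def pairing (d : ℕ) (J : ℕ → ℝ) (u : (Fin d → ℤ) → ℂ) : ℝ :=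
  (1/2) * ∑' n : Fin d → ℤ, ∑' m : Fin d → ℤ,
    if m = n then 0 else J (latNorm (n - m)) * ‖u n - u m‖ ^ 2

/-- The mass `M[u] = Σ_n |u_n|²`. -/
def mass (d : ℕ) (u : (Fin d → ℤ) → ℂ) : ℝ := ∑' n : Fin d → ℤ, ‖u n‖ ^ 2

/-- Membership in `ℓ²(ℤ^d)`. -/
def MemL2 (d : ℕ) (u : (Fin d → ℤ) → ℂ) : Prop := Summable fun n : Fin d → ℤ => ‖u n‖ ^ 2

/-- The potential term `Σ_n |u_n|^{p+1}`. -/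
def ppot (d : ℕ) (p : ℝ) (u : (Fin d → ℤ) → ℂ) : ℝ := ∑' n : Fin d → ℤ, ‖u n‖ ^ (p + 1)

/-- The energy `H[u] = (1/2)⟨Lu,u⟩ - (1/(p+1)) Σ_n |u_n|^{p+1}`. -/
def energy (d : ℕ) (J : ℕ → ℝ) (p : ℝ) (u : (Fin d → ℤ) → ℂ) : ℝ :=
  (1/2) * pairing d J u - (1/(p+1)) * ppot d p u

/-- `I_ν = inf {H[q] : q ∈ ℓ², M[q] = ν}`. -/
def Ifun (d : ℕ) (J : ℕ → ℝ) (p : ℝ) (ν : ℝ) : ℝ :=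
  sInf {x : ℝ | ∃ q, MemL2 d q ∧ mass d q = ν ∧ energy d J p q = x}

open scoped ENNReal
/-- `J` is of order `α ∈ (0,∞]`: for finite `α`, `k^{d+α} J_k` tends to a finite positive
limit; for `α = ∞`, `k^{d+β} J_k → 0` for every `β > 0`. -/
def JOrder (d : ℕ) (J : ℕ → ℝ) (α : ℝ≥0∞) : Prop :=
  if α = ⊤ then
    ∀ β : ℝ, 0 < β → Tendsto (fun k : ℕ => (k : ℝ) ^ ((d : ℝ) + β) * J k) atTop (𝓝 0)
  else
    ∃ A : ℝ, 0 < A ∧ Tendsto (fun k : ℕ => (k : ℝ) ^ ((d : ℝ) + α.toReal) * J k) atTop (𝓝 A)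

/-- `α′ = α/2` for `α ∈ (0,2)` and `α′ = 1` for `α ∈ [2,∞]`. -/
def alphaPrime (α : ℝ≥0∞) : ℝ := if α < 2 then α.toReal / 2 else 1

/-- The Gagliardo–Nirenberg-type inequality at mass level `ν`:
`Σ_n |q_n|^{p+1} ≤ ((p+1)/2) ν^{-(p-1)/2} M[q]^{(p-1)/2} ⟨Lq,q⟩` for all `q ∈ ℓ²`. -/
def GNineq (d : ℕ) (J : ℕ → ℝ) (p ν : ℝ) : Prop :=
  ∀ q : (Fin d → ℤ) → ℂ, MemL2 d q →
    ppot d p q ≤ ((p + 1) / 2) * ν ^ (-(p - 1) / 2) * (mass d q) ^ ((p - 1) / 2) *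
      pairing d J q

/-- The excitation threshold `ν₀ = sup {ν > 0 : GN inequality holds at level ν}`,
with `ν₀ = 0` if no such `ν` exists. -/
def nuZero (d : ℕ) (J : ℕ → ℝ) (p : ℝ) : ℝ :=
  sSup (insert 0 {ν : ℝ | 0 < ν ∧ GNineq d J p ν})

/-!
Everything is governed by scaling. If `c² M[u] = ν`, then
`H[c u] = c² (H[u] - (c^(p-1) - 1) / (p+1) Σ |u|^(p+1))`. Hence `M[u] I_ν ≤ ν H[u]` whenever
`M[u] ≤ ν`, strictly if `0 < M[u] < ν`, and the inequality defining the threshold at level `ν` says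
exactly that `I_ν ≥ 0`. Below the threshold strictness makes the energy positive, while slowly
decaying geometric profiles, whose kinetic energy is arbitrarily small, give `I_ν ≤ 0`. Above the
threshold `I_ν < 0` prevents a minimizing sequence from vanishing, so after translations it has a
weak limit `q ≠ 0`. Mass and energy split asymptotically between `q` and the remainder, which gives
`ν H[q] ≤ M[q] I_ν`. Strictness then excludes `M[q] < ν`, so `q` has mass `ν` and is a minimizer.
-/

section Inequalities

variable {E : Type*} [SeminormedAddCommGroup E]

lemma norm_sub_sq_le_two_mul (x y : E) : ‖x - y‖ ^ 2 ≤ 2 * (‖x‖ ^ 2 + ‖y‖ ^ 2) :=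
  (pow_le_pow_left₀ (norm_nonneg _) (norm_sub_le x y) 2).trans add_sq_le

lemma abs_norm_add_sq_sub_sub_le {F : Type*} [SeminormedAddCommGroup F] [InnerProductSpace ℝ F]
    (x y : F) : |‖x + y‖ ^ 2 - ‖x‖ ^ 2 - ‖y‖ ^ 2| ≤ 2 * (‖x‖ * ‖y‖) := by
  have expand : ‖x + y‖ ^ 2 - ‖x‖ ^ 2 - ‖y‖ ^ 2 = 2 * inner ℝ x y := by
    rw [norm_add_sq_real]; ring
  rw [expand, abs_mul, abs_two]
  gcongr
  exact abs_real_inner_le_norm x y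

lemma abs_rpow_sub_rpow_le {s T a b : ℝ} (hs : 1 ≤ s) (ha : a ∈ Set.Icc 0 T)
    (hb : b ∈ Set.Icc 0 T) : |a ^ s - b ^ s| ≤ s * T ^ (s - 1) * |a - b| := by
  refine Convex.norm_image_sub_le_of_norm_hasDerivWithin_le (f := fun x : ℝ => x ^ s)
    (fun x _ => (Real.hasDerivAt_rpow_const (.inr hs)).hasDerivWithinAt) (fun x hx => ?_)
    (convex_Icc 0 T) hb ha
  have hx₀ : 0 ≤ x := hx.1
  rw [Real.norm_of_nonneg (by positivity)]
  have hxT : x ≤ T := hx.2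
  gcongr

lemma abs_norm_add_rpow_sub_sub_le_of_norm_le {s : ℝ} (hs : 1 ≤ s) {x y : E} (hyx : ‖y‖ ≤ ‖x‖) :
    |‖x + y‖ ^ s - ‖x‖ ^ s - ‖y‖ ^ s| ≤ (s * 2 ^ (s - 1) + 1) * (‖x‖ ^ (s - 1) * ‖y‖) := by
  have hx := norm_nonneg x
  have hdiff : |‖x + y‖ ^ s - ‖x‖ ^ s| ≤ s * (2 * ‖x‖) ^ (s - 1) * ‖y‖ := by
    refine (abs_rpow_sub_rpow_le (T := 2 * ‖x‖) hs ⟨norm_nonneg _, ?_⟩ ⟨hx, ?_⟩).trans ?_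
    · linarith [norm_add_le x y]
    · linarith
    · gcongr
      simpa using abs_norm_sub_norm_le (x + y) x
  have hsmall : |‖y‖ ^ s| ≤ ‖x‖ ^ (s - 1) * ‖y‖ := by
    have hpow : ‖y‖ ^ s = ‖y‖ ^ (s - 1) * ‖y‖ := by
      rw [← Real.rpow_add_one' (norm_nonneg y) (by linarith), sub_add_cancel]
    rw [abs_of_nonneg (by positivity), hpow]
    gcongr
  calc |‖x + y‖ ^ s - ‖x‖ ^ s - ‖y‖ ^ s|
      ≤ |‖x + y‖ ^ s - ‖x‖ ^ s| + |‖y‖ ^ s| := abs_sub _ _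
    _ ≤ s * (2 * ‖x‖) ^ (s - 1) * ‖y‖ + ‖x‖ ^ (s - 1) * ‖y‖ := add_le_add hdiff hsmall
    _ = (s * 2 ^ (s - 1) + 1) * (‖x‖ ^ (s - 1) * ‖y‖) := by
      rw [Real.mul_rpow zero_le_two hx]; ring

lemma abs_norm_add_rpow_sub_sub_le {s R : ℝ} (hs : 2 ≤ s) {x y : E} (hx : ‖x‖ ≤ R)
    (hy : ‖y‖ ≤ R) :
    |‖x + y‖ ^ s - ‖x‖ ^ s - ‖y‖ ^ s| ≤
      (s * 2 ^ (s - 1) + 1) * R ^ (s - 2) * (‖x‖ * ‖y‖) := by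
  wlog hyx : ‖y‖ ≤ ‖x‖ generalizing x y
  · have hswap := this hy hx (le_of_not_ge hyx)
    rwa [add_comm y, mul_comm ‖y‖, sub_right_comm] at hswap
  refine (abs_norm_add_rpow_sub_sub_le_of_norm_le (by linarith) hyx).trans ?_
  have hpow : ‖x‖ ^ (s - 1) ≤ R ^ (s - 2) * ‖x‖ := by
    rw [show s - 1 = s - 2 + 1 by ring, Real.rpow_add_one' (norm_nonneg x) (by linarith)]
    gcongr
  calc (s * 2 ^ (s - 1) + 1) * (‖x‖ ^ (s - 1) * ‖y‖)
      ≤ (s * 2 ^ (s - 1) + 1) * (R ^ (s - 2) * ‖x‖ * ‖y‖) := by gcongr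
    _ = (s * 2 ^ (s - 1) + 1) * R ^ (s - 2) * (‖x‖ * ‖y‖) := by ring

lemma sq_sub_pow_le_mul_add {r : ℝ} (h₀ : 0 ≤ r) (h₁ : r ≤ 1) {a b c : ℕ} (hab : a ≤ b + c)
    (hba : b ≤ a + c) : (r ^ a - r ^ b) ^ 2 ≤ (1 - r ^ c) ^ 2 * ((r ^ a) ^ 2 + (r ^ b) ^ 2) := by
  wlog h : a ≤ b generalizing a b
  · have hswap := this hba hab (le_of_not_ge h)
    rwa [sub_sq_comm, add_comm ((r ^ b) ^ 2)] at hswap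
  have hanti : r ^ b ≤ r ^ a := pow_le_pow_of_le_one h₀ h₁ h
  have hslow : r ^ a * r ^ c ≤ r ^ b := pow_add r a c ▸ pow_le_pow_of_le_one h₀ h₁ hba
  calc (r ^ a - r ^ b) ^ 2 ≤ ((1 - r ^ c) * r ^ a) ^ 2 :=
        pow_le_pow_left₀ (sub_nonneg.2 hanti) (by linarith) 2
    _ = (1 - r ^ c) ^ 2 * (r ^ a) ^ 2 := mul_pow _ _ _
    _ ≤ (1 - r ^ c) ^ 2 * ((r ^ a) ^ 2 + (r ^ b) ^ 2) := by
      gcongr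
      exact le_add_of_nonneg_right (sq_nonneg _)

end Inequalities

section WeakConvergence

variable {κ ι E : Type*} [NormedAddCommGroup E] {l : Filter κ} {u r : κ → ι → E} {q v w : ι → E}

lemma summable_norm_sub_sq (hv : Summable fun i => ‖v i‖ ^ 2) (hw : Summable fun i => ‖w i‖ ^ 2) :
    Summable fun i => ‖v i - w i‖ ^ 2 :=
  .of_nonneg_of_le (fun _ => by positivity) (fun _ => norm_sub_sq_le_two_mul _ _)
    ((hv.add hw).mul_left 2)

lemma norm_le_sqrt_tsum_sq (hv : Summable fun i => ‖v i‖ ^ 2) (i : ι) :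
    ‖v i‖ ≤ √(∑' j, ‖v j‖ ^ 2) :=
  Real.le_sqrt_of_sq_le (hv.le_tsum i fun _ _ => by positivity)

/-- Weak convergence in `ℓ²(ι; E)`, encoded as a uniform bound in `ℓ²` together with
coordinatewise convergence. -/
structure TendstoWeakly (u : κ → ι → E) (l : Filter κ) (q : ι → E) : Prop where
  summable_sq : ∀ k, Summable fun i => ‖u k i‖ ^ 2
  bounded : ∃ B, ∀ k, ∑' i, ‖u k i‖ ^ 2 ≤ B
  tendsto_apply : ∀ i, Tendsto (fun k => u k i) l (𝓝 (q i))

namespace TendstoWeakly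

lemma summable_limit_and_tsum_le [l.NeBot] {B : ℝ} (hu : TendstoWeakly u l q)
    (hB : ∀ k, ∑' i, ‖u k i‖ ^ 2 ≤ B) :
    (Summable fun i => ‖q i‖ ^ 2) ∧ ∑' i, ‖q i‖ ^ 2 ≤ B := by
  have hfin (S : Finset ι) : ∑ i ∈ S, ‖q i‖ ^ 2 ≤ B :=
    le_of_tendsto' (tendsto_finsetSum S fun i _ => (hu.tendsto_apply i).norm.pow 2) fun k =>
      ((hu.summable_sq k).sum_le_tsum S fun _ _ => by positivity).trans (hB k)
  have hq : Summable fun i => ‖q i‖ ^ 2 := summable_of_sum_le (fun _ => by positivity) hfin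
  exact ⟨hq, hq.tsum_le_of_sum_le hfin⟩

lemma summable_limit [l.NeBot] (hu : TendstoWeakly u l q) : Summable fun i => ‖q i‖ ^ 2 :=
  have ⟨_, hB⟩ := hu.bounded
  (hu.summable_limit_and_tsum_le hB).1

lemma sub_limit [l.NeBot] (hu : TendstoWeakly u l q) :
    TendstoWeakly (fun k i => u k i - q i) l 0 where
  summable_sq k := summable_norm_sub_sq (hu.summable_sq k) hu.summable_limit
  bounded := by
    obtain ⟨B, hB⟩ := hu.bounded
    refine ⟨2 * (B + ∑' i, ‖q i‖ ^ 2), fun k => ?_⟩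
    have hadd := (hu.summable_sq k).add hu.summable_limit
    calc ∑' i, ‖u k i - q i‖ ^ 2 ≤ ∑' i, 2 * (‖u k i‖ ^ 2 + ‖q i‖ ^ 2) :=
          (summable_norm_sub_sq (hu.summable_sq k) hu.summable_limit).tsum_le_tsum
            (fun i => norm_sub_sq_le_two_mul _ _) (hadd.mul_left 2)
      _ = 2 * (∑' i, ‖u k i‖ ^ 2 + ∑' i, ‖q i‖ ^ 2) := by
        rw [tsum_mul_left, (hu.summable_sq k).tsum_add hu.summable_limit]
      _ ≤ 2 * (B + ∑' i, ‖q i‖ ^ 2) := by gcongr; exact hB k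
  tendsto_apply i := by simpa using (hu.tendsto_apply i).sub_const (q i)

lemma exists_norm_le [l.NeBot] (hu : TendstoWeakly u l q) :
    ∃ R, (∀ k i, ‖u k i - q i‖ ≤ R) ∧ ∀ i, ‖q i‖ ≤ R := by
  obtain ⟨B, hB⟩ := hu.sub_limit.bounded
  refine ⟨max (√B) (√(∑' j, ‖q j‖ ^ 2)), fun k i => ?_, fun i => ?_⟩
  · exact (norm_le_sqrt_tsum_sq (hu.sub_limit.summable_sq k) i).trans
      ((Real.sqrt_le_sqrt (hB k)).trans (le_max_left _ _))
  · exact (norm_le_sqrt_tsum_sq hu.summable_limit i).trans (le_max_right _ _)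

lemma summable_max_zero_and_tendsto_tsum (hr : TendstoWeakly r l 0)
    (hw : Summable fun i => ‖w i‖ ^ 2) {η : ℝ} (hη : 0 < η) :
    (∀ k, Summable fun i => max (‖r k i‖ * ‖w i‖ - η * ‖r k i‖ ^ 2) 0) ∧
      Tendsto (fun k => ∑' i, max (‖r k i‖ * ‖w i‖ - η * ‖r k i‖ ^ 2) 0) l (𝓝 0) := by
  have hdom : Summable fun i => ‖w i‖ ^ 2 / (4 * η) := hw.div_const _
  have hle (k : κ) (i : ι) :
      ‖max (‖r k i‖ * ‖w i‖ - η * ‖r k i‖ ^ 2) 0‖ ≤ ‖w i‖ ^ 2 / (4 * η) := by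
    rw [Real.norm_of_nonneg (le_max_right _ _)]
    refine max_le ?_ (by positivity)
    rw [le_div_iff₀ (by positivity)]
    linarith [sq_nonneg (‖w i‖ - 2 * η * ‖r k i‖)]
  have hpt (i : ι) :
      Tendsto (fun k => max (‖r k i‖ * ‖w i‖ - η * ‖r k i‖ ^ 2) 0) l (𝓝 0) := by
    have hri : Tendsto (fun k => ‖r k i‖) l (𝓝 0) := by simpa using (hr.tendsto_apply i).norm
    simpa using ((hri.mul_const ‖w i‖).sub ((hri.pow 2).const_mul η)).max
      (tendsto_const_nhds (x := (0 : ℝ)))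
  have hlim := tendsto_tsum_of_dominated_convergence hdom hpt (.of_forall hle)
  rw [tsum_zero] at hlim
  exact ⟨fun k => .of_norm_bounded hdom (hle k), hlim⟩

/- Young's inequality splits `‖r‖ ‖w‖` into `η ‖r‖²`, whose sum is at most `η B`, and an excess
dominated by `‖w‖² / (4 η)`, whose sum tends to zero. -/
lemma tendsto_tsum_norm_mul_norm (hr : TendstoWeakly r l 0) (hw : Summable fun i => ‖w i‖ ^ 2) :
    Tendsto (fun k => ∑' i, ‖r k i‖ * ‖w i‖) l (𝓝 0) := by
  obtain ⟨B, hB⟩ := hr.bounded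
  refine tendsto_order.2 ⟨fun a ha => .of_forall fun k => ha.trans_le ?_, fun ε hε => ?_⟩
  · exact tsum_nonneg fun _ => by positivity
  obtain ⟨η, hη, hηB⟩ : ∃ η > 0, η * B < ε / 2 := by
    obtain hB₀ | hB₀ := le_or_gt B 0
    · exact ⟨1, one_pos, by linarith⟩
    · exact ⟨ε / (4 * B), by positivity, by field_simp; norm_num⟩
  obtain ⟨hexc, hlim⟩ := hr.summable_max_zero_and_tendsto_tsum hw hη
  filter_upwards [hlim.eventually (gt_mem_nhds (half_pos hε))] with k hk
  have hle (i : ι) : ‖r k i‖ * ‖w i‖ ≤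
      η * ‖r k i‖ ^ 2 + max (‖r k i‖ * ‖w i‖ - η * ‖r k i‖ ^ 2) 0 := by
    linarith [le_max_left (‖r k i‖ * ‖w i‖ - η * ‖r k i‖ ^ 2) 0]
  have hsum := ((hr.summable_sq k).mul_left η).add (hexc k)
  calc ∑' i, ‖r k i‖ * ‖w i‖
      ≤ ∑' i, (η * ‖r k i‖ ^ 2 + max (‖r k i‖ * ‖w i‖ - η * ‖r k i‖ ^ 2) 0) :=
        (hsum.of_nonneg_of_le (fun _ => by positivity) hle).tsum_le_tsum hle hsum
    _ = η * ∑' i, ‖r k i‖ ^ 2 + ∑' i, max (‖r k i‖ * ‖w i‖ - η * ‖r k i‖ ^ 2) 0 := by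
      rw [((hr.summable_sq k).mul_left η).tsum_add (hexc k), tsum_mul_left]
    _ < ε := by linarith [mul_le_mul_of_nonneg_left (hB k) hη.le]

/- Brezis–Lieb splitting: the cross term is controlled by `∑ ‖u k - q‖ ‖q‖`. -/
lemma tendsto_tsum_sub_tsum_sub [l.NeBot] (hu : TendstoWeakly u l q) {f : E → ℝ} {C : ℝ}
    (hf : ∀ v : ι → E, (Summable fun i => ‖v i‖ ^ 2) → Summable fun i => f (v i))
    (hC : ∀ k i, |f (u k i) - f (u k i - q i) - f (q i)| ≤ C * (‖u k i - q i‖ * ‖q i‖)) :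
    Tendsto (fun k => ∑' i, f (u k i) - ∑' i, f (u k i - q i)) l (𝓝 (∑' i, f (q i))) := by
  have hq := hu.summable_limit
  have hr := hu.sub_limit
  have hcross (k : κ) : Summable fun i => ‖u k i - q i‖ * ‖q i‖ :=
    ((hr.summable_sq k).add hq).of_nonneg_of_le (fun _ => by positivity) fun i => by
      nlinarith [sq_nonneg (‖u k i - q i‖ - ‖q i‖), sq_nonneg ‖u k i - q i‖, sq_nonneg ‖q i‖]
  have herr : Tendsto (fun k => ∑' i, (f (u k i) - f (u k i - q i) - f (q i))) l (𝓝 0) := by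
    refine squeeze_zero_norm (fun k => tsum_of_norm_bounded ((hcross k).mul_left C).hasSum (hC k))
      ?_
    simpa only [tsum_mul_left, mul_zero] using
      (hr.tendsto_tsum_norm_mul_norm hq).const_mul C
  have hadd := herr.add_const (∑' i, f (q i))
  rw [zero_add] at hadd
  refine hadd.congr fun k => ?_
  have hfu := hf _ (hu.summable_sq k)
  have hfr := hf _ (hr.summable_sq k)
  rw [(hfu.sub hfr).tsum_sub (hf q hq), hfu.tsum_sub hfr, sub_add_cancel]

lemma tendsto_tsum_norm_sq_sub [InnerProductSpace ℝ E] [l.NeBot] (hu : TendstoWeakly u l q) :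
    Tendsto (fun k => ∑' i, ‖u k i‖ ^ 2 - ∑' i, ‖u k i - q i‖ ^ 2) l (𝓝 (∑' i, ‖q i‖ ^ 2)) :=
  hu.tendsto_tsum_sub_tsum_sub (f := fun x => ‖x‖ ^ 2) (fun _ hv => hv) fun k i => by
    simpa using abs_norm_add_sq_sub_sub_le (u k i - q i) (q i)

end TendstoWeakly

lemma exists_subseq_tendstoWeakly [ProperSpace E] [Countable ι] {v : ℕ → ι → E} {B : ℝ}
    (hv : ∀ k, Summable fun i => ‖v k i‖ ^ 2) (hB : ∀ k, ∑' i, ‖v k i‖ ^ 2 ≤ B) :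
    ∃ (q : ι → E) (φ : ℕ → ℕ), StrictMono φ ∧ TendstoWeakly (v ∘ φ) atTop q := by
  have hcompact : IsCompact (Set.univ.pi fun _ : ι => Metric.closedBall (0 : E) √B) :=
    isCompact_univ_pi fun _ => isCompact_closedBall _ _
  obtain ⟨q, -, φ, hφ, hlim⟩ := hcompact.tendsto_subseq (x := v) fun k i _ =>
    mem_closedBall_zero_iff.2 ((norm_le_sqrt_tsum_sq (hv k) i).trans (Real.sqrt_le_sqrt (hB k)))
  exact ⟨q, φ, hφ, fun k => hv (φ k), ⟨B, fun k => hB (φ k)⟩, tendsto_pi_nhds.1 hlim⟩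

end WeakConvergence

section KineticForm

lemma hasSum_kernel_mul_add {G : Type*} [AddGroup G] {κ f : G → ℝ} (hκ : Summable κ)
    (hf : Summable f) :
    HasSum (fun x : G × G => κ (x.1 - x.2) * (f x.1 + f x.2)) (2 * (∑' k, κ k) * ∑' n, f n) := by
  have hprod := hf.hasSum.mul hκ.hasSum
    (summable_mul_of_summable_norm (f := f) (g := κ) hf.norm hκ.norm)
  have hleft := (Equiv.prodShear (Equiv.refl G) Equiv.subLeft).hasSum_iff.2 hprod
  have hright :=
    ((Equiv.prodComm G G).trans (Equiv.prodShear (Equiv.refl G) Equiv.subRight)).hasSum_iff.2 hprod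
  convert! hleft.add hright using 1
  · funext x
    simp only [Function.comp_apply, Equiv.prodShear_apply, Equiv.refl_apply, Equiv.subLeft_apply,
      Equiv.trans_apply, Equiv.prodComm_apply, Prod.fst_swap, Prod.snd_swap, Equiv.subRight_apply]
    ring
  · ring

variable {d : ℕ} {J : ℕ → ℝ} {u : (Fin d → ℤ) → ℂ}

lemma jbarSummand_nonneg (hJ : ∀ k, 0 ≤ J k) (m : Fin d → ℤ) : 0 ≤ JbarSummand d J m := by
  unfold JbarSummand
  split_ifs
  exacts [le_rfl, hJ _]

lemma pairing_nonneg (hJ : ∀ k, 0 ≤ J k) (u : (Fin d → ℤ) → ℂ) : 0 ≤ pairing d J u := by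
  refine mul_nonneg (by norm_num) (tsum_nonneg fun n => tsum_nonneg fun m => ?_)
  split_ifs
  exacts [le_rfl, mul_nonneg (hJ _) (by positivity)]

/-- The weighted difference `√J_{|n-m|} (u_n - u_m)`. It maps `ℓ²(ℤ^d)` linearly into
`ℓ²(ℤ^d × ℤ^d)` and turns `⟨Lu,u⟩` into half of a squared `ℓ²` norm. -/
def weightedDiff (d : ℕ) (J : ℕ → ℝ) (u : (Fin d → ℤ) → ℂ) (x : (Fin d → ℤ) × (Fin d → ℤ)) : ℂ :=
  √(JbarSummand d J (x.1 - x.2)) • (u x.1 - u x.2)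

lemma norm_weightedDiff_sq (hJ : ∀ k, 0 ≤ J k) (x : (Fin d → ℤ) × (Fin d → ℤ)) :
    ‖weightedDiff d J u x‖ ^ 2 = JbarSummand d J (x.1 - x.2) * ‖u x.1 - u x.2‖ ^ 2 := by
  rw [weightedDiff, norm_smul, mul_pow, Real.norm_of_nonneg (Real.sqrt_nonneg _),
    Real.sq_sqrt (jbarSummand_nonneg hJ _)]

lemma weightedDiff_sub (u v : (Fin d → ℤ) → ℂ) (x : (Fin d → ℤ) × (Fin d → ℤ)) :
    weightedDiff d J (fun n => u n - v n) x = weightedDiff d J u x - weightedDiff d J v x := by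
  simp only [weightedDiff, ← smul_sub, sub_sub_sub_comm]

lemma summable_and_tsum_norm_weightedDiff_sq_le (hJ : ∀ k, 0 ≤ J k) (hu : MemL2 d u)
    {θ : (Fin d → ℤ) → ℝ} (hθ : Summable fun k => JbarSummand d J k * θ k)
    (h : ∀ n m, ‖u n - u m‖ ^ 2 ≤ θ (n - m) * (‖u n‖ ^ 2 + ‖u m‖ ^ 2)) :
    (Summable fun x => ‖weightedDiff d J u x‖ ^ 2) ∧
      ∑' x, ‖weightedDiff d J u x‖ ^ 2 ≤ 2 * (∑' k, JbarSummand d J k * θ k) * mass d u := by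
  have hsum := hasSum_kernel_mul_add hθ hu
  have hle (x : (Fin d → ℤ) × (Fin d → ℤ)) : ‖weightedDiff d J u x‖ ^ 2 ≤
      JbarSummand d J (x.1 - x.2) * θ (x.1 - x.2) * (‖u x.1‖ ^ 2 + ‖u x.2‖ ^ 2) := by
    rw [norm_weightedDiff_sq hJ, mul_assoc]
    exact mul_le_mul_of_nonneg_left (h _ _) (jbarSummand_nonneg hJ _)
  have hdiff := hsum.summable.of_nonneg_of_le (fun _ => by positivity) hle
  exact ⟨hdiff, (hdiff.tsum_le_tsum hle hsum.summable).trans_eq hsum.tsum_eq⟩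

lemma summable_and_tsum_norm_weightedDiff_sq_le_mass (hJ : ∀ k, 0 ≤ J k)
    (hJbar : Summable (JbarSummand d J)) (hu : MemL2 d u) :
    (Summable fun x => ‖weightedDiff d J u x‖ ^ 2) ∧
      ∑' x, ‖weightedDiff d J u x‖ ^ 2 ≤ 4 * Jbar d J * mass d u := by
  obtain ⟨hsum, hle⟩ := summable_and_tsum_norm_weightedDiff_sq_le hJ hu (θ := fun _ => 2)
    (hJbar.mul_right 2) fun n m => norm_sub_sq_le_two_mul (u n) (u m)
  rw [tsum_mul_right, ← Jbar] at hle
  exact ⟨hsum, hle.trans_eq (by ring)⟩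

lemma pairing_eq_half_tsum (hJ : ∀ k, 0 ≤ J k) (hJbar : Summable (JbarSummand d J))
    (hu : MemL2 d u) : pairing d J u = 1 / 2 * ∑' x, ‖weightedDiff d J u x‖ ^ 2 := by
  rw [(summable_and_tsum_norm_weightedDiff_sq_le_mass hJ hJbar hu).1.tsum_prod, pairing]
  congr! 5 with n m
  rw [norm_weightedDiff_sq hJ, JbarSummand, ite_mul, zero_mul]
  simp only [sub_eq_zero, eq_comm]

lemma pairing_le_of_norm_sub_sq_le (hJ : ∀ k, 0 ≤ J k) (hJbar : Summable (JbarSummand d J))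
    (hu : MemL2 d u) {θ : (Fin d → ℤ) → ℝ} (hθ : Summable fun k => JbarSummand d J k * θ k)
    (h : ∀ n m, ‖u n - u m‖ ^ 2 ≤ θ (n - m) * (‖u n‖ ^ 2 + ‖u m‖ ^ 2)) :
    pairing d J u ≤ (∑' k, JbarSummand d J k * θ k) * mass d u := by
  rw [pairing_eq_half_tsum hJ hJbar hu]
  linarith [(summable_and_tsum_norm_weightedDiff_sq_le hJ hu hθ h).2]

end KineticForm

section MassAndPotential

variable {d : ℕ} {p : ℝ} {u : (Fin d → ℤ) → ℂ}

lemma mass_nonneg (u : (Fin d → ℤ) → ℂ) : 0 ≤ mass d u :=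
  tsum_nonneg fun _ => by positivity

lemma mass_pos (hu : MemL2 d u) {n : Fin d → ℤ} (hn : u n ≠ 0) : 0 < mass d u :=
  hu.tsum_pos (fun _ => by positivity) n (by positivity)

lemma exists_ne_zero_of_mass_pos (hm : 0 < mass d u) : ∃ n, u n ≠ 0 := by
  by_contra! hzero
  simp [mass, hzero] at hm

lemma ppot_nonneg (u : (Fin d → ℤ) → ℂ) : 0 ≤ ppot d p u :=
  tsum_nonneg fun _ => by positivity

lemma summable_and_ppot_le (hp : -1 < p) (hu : MemL2 d u) {c : ℝ}
    (h : ∀ n, ‖u n‖ ^ (p - 1) ≤ c) :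
    (Summable fun n => ‖u n‖ ^ (p + 1)) ∧ ppot d p u ≤ c * mass d u := by
  have hle (n : Fin d → ℤ) : ‖u n‖ ^ (p + 1) ≤ c * ‖u n‖ ^ 2 := by
    rw [show p + 1 = p - 1 + (2 : ℕ) by push_cast; ring,
      Real.rpow_add_natCast' (norm_nonneg _) (by push_cast; linarith)]
    gcongr
    exact h n
  have hsum := (hu.mul_left c).of_nonneg_of_le (fun _ => by positivity) hle
  exact ⟨hsum, (hsum.tsum_le_tsum hle (hu.mul_left c)).trans_eq tsum_mul_left⟩

lemma summable_and_ppot_le_sqrt_mass (hp : 1 ≤ p) (hu : MemL2 d u) :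
    (Summable fun n => ‖u n‖ ^ (p + 1)) ∧ ppot d p u ≤ √(mass d u) ^ (p - 1) * mass d u :=
  summable_and_ppot_le (by linarith) hu fun n =>
    Real.rpow_le_rpow (norm_nonneg _) (norm_le_sqrt_tsum_sq hu n) (by linarith)

lemma ppot_pos (hp : 1 ≤ p) (hu : MemL2 d u) (hm : 0 < mass d u) : 0 < ppot d p u := by
  obtain ⟨n, hn⟩ := exists_ne_zero_of_mass_pos hm
  exact (summable_and_ppot_le_sqrt_mass hp hu).1.tsum_pos (fun _ => by positivity) n (by positivity)

lemma ppot_eq_zero_of_mass_eq_zero (hp : 1 ≤ p) (hu : MemL2 d u) (hm : mass d u = 0) :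
    ppot d p u = 0 := by
  refine le_antisymm ?_ (ppot_nonneg u)
  simpa [hm] using (summable_and_ppot_le_sqrt_mass hp hu).2

end MassAndPotential

section Symmetries

variable {d : ℕ} {J : ℕ → ℝ} {p : ℝ} {u : (Fin d → ℤ) → ℂ}

lemma MemL2.const_smul (hu : MemL2 d u) (c : ℝ) : MemL2 d (c • u) := by
  simpa only [MemL2, Pi.smul_apply, norm_smul, mul_pow] using Summable.mul_left (‖c‖ ^ 2) hu

lemma mass_smul (c : ℝ) (u : (Fin d → ℤ) → ℂ) : mass d (c • u) = c ^ 2 * mass d u := by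
  simp only [mass, Pi.smul_apply, norm_smul, mul_pow, Real.norm_eq_abs, sq_abs, tsum_mul_left]

lemma ppot_smul {c : ℝ} (hc : 0 ≤ c) (u : (Fin d → ℤ) → ℂ) :
    ppot d p (c • u) = c ^ (p + 1) * ppot d p u := by
  simp only [ppot, Pi.smul_apply, norm_smul, Real.norm_of_nonneg hc,
    Real.mul_rpow hc (norm_nonneg _), tsum_mul_left]

lemma pairing_smul (c : ℝ) (u : (Fin d → ℤ) → ℂ) :
    pairing d J (c • u) = c ^ 2 * pairing d J u := by
  have hterm (n m : Fin d → ℤ) :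
      (if m = n then 0 else J (latNorm (n - m)) * ‖(c • u) n - (c • u) m‖ ^ 2) =
        c ^ 2 * if m = n then 0 else J (latNorm (n - m)) * ‖u n - u m‖ ^ 2 := by
    simp only [Pi.smul_apply, ← smul_sub, norm_smul, mul_pow, Real.norm_eq_abs, sq_abs, mul_ite,
      mul_zero, mul_left_comm]
  simp only [pairing, hterm, tsum_mul_left, mul_left_comm]

lemma energy_smul {c : ℝ} (hc : 0 < c) (u : (Fin d → ℤ) → ℂ) :
    energy d J p (c • u) =
      c ^ 2 * (energy d J p u - (c ^ (p - 1) - 1) / (p + 1) * ppot d p u) := by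
  have hpow : c ^ (p + 1) = c ^ (p - 1) * c ^ 2 := by
    rw [← Real.rpow_add_natCast hc.ne']
    norm_num [sub_add]
  rw [energy, pairing_smul, ppot_smul hc.le, hpow, energy]
  ring

lemma MemL2.comp_add_right (hu : MemL2 d u) (a : Fin d → ℤ) : MemL2 d fun n => u (n + a) :=
  Summable.comp_injective hu (add_left_injective a)

lemma mass_comp_add_right (a : Fin d → ℤ) (u : (Fin d → ℤ) → ℂ) :
    mass d (fun n => u (n + a)) = mass d u :=
  (Equiv.addRight a).tsum_eq fun n => ‖u n‖ ^ 2

lemma ppot_comp_add_right (a : Fin d → ℤ) (u : (Fin d → ℤ) → ℂ) :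
    ppot d p (fun n => u (n + a)) = ppot d p u :=
  (Equiv.addRight a).tsum_eq fun n => ‖u n‖ ^ (p + 1)

lemma pairing_comp_add_right (a : Fin d → ℤ) (u : (Fin d → ℤ) → ℂ) :
    pairing d J (fun n => u (n + a)) = pairing d J u := by
  unfold pairing
  congr 1
  refine (tsum_congr fun n => ?_).trans ((Equiv.addRight a).tsum_eq _)
  refine (tsum_congr fun m => ?_).trans ((Equiv.addRight a).tsum_eq _)
  simp

lemma energy_comp_add_right (a : Fin d → ℤ) (u : (Fin d → ℤ) → ℂ) :
    energy d J p (fun n => u (n + a)) = energy d J p u := by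
  rw [energy, pairing_comp_add_right, ppot_comp_add_right, energy]

end Symmetries

section EnergyInfimum

variable {d : ℕ} {J : ℕ → ℝ} {p ν : ℝ} {u : (Fin d → ℤ) → ℂ}

lemma neg_mul_mass_le_energy (hJ : ∀ k, 0 ≤ J k) (hp : -1 < p) (hu : MemL2 d u) {c : ℝ}
    (h : ∀ n, ‖u n‖ ^ (p - 1) ≤ c) : -(c / (p + 1)) * mass d u ≤ energy d J p u := by
  have hp₁ : 0 < p + 1 := by linarith
  have hppot : 1 / (p + 1) * ppot d p u ≤ 1 / (p + 1) * (c * mass d u) := by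
    gcongr
    exact (summable_and_ppot_le hp hu h).2
  have hpair := pairing_nonneg hJ u
  calc -(c / (p + 1)) * mass d u = -(1 / (p + 1) * (c * mass d u)) := by ring
    _ ≤ energy d J p u := by rw [energy]; linarith

lemma ifun_le_energy (hJ : ∀ k, 0 ≤ J k) (hp : 1 ≤ p) (hu : MemL2 d u) :
    Ifun d J p (mass d u) ≤ energy d J p u := by
  refine csInf_le ⟨-(√(mass d u) ^ (p - 1) / (p + 1)) * mass d u, ?_⟩ ⟨u, hu, rfl, rfl⟩
  rintro - ⟨q, hq, hm, rfl⟩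
  rw [← hm]
  exact neg_mul_mass_le_energy hJ (by linarith) hq fun n =>
    Real.rpow_le_rpow (norm_nonneg _) (norm_le_sqrt_tsum_sq hq n) (by linarith)

lemma mass_mul_ifun_le_mul_sub (hJ : ∀ k, 0 ≤ J k) (hp : 1 ≤ p) (hν : 0 < ν) (hu : MemL2 d u)
    (hm : 0 < mass d u) :
    mass d u * Ifun d J p ν ≤
      ν * (energy d J p u - ((ν / mass d u) ^ ((p - 1) / 2) - 1) / (p + 1) * ppot d p u) := by
  have hratio : 0 < ν / mass d u := by positivity
  have hsmul := ifun_le_energy hJ hp (hu.const_smul √(ν / mass d u))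
  rw [mass_smul, energy_smul (Real.sqrt_pos.2 hratio), Real.sq_sqrt hratio.le,
    div_mul_cancel₀ _ hm.ne', ← Real.rpow_div_two_eq_sqrt _ hratio.le] at hsmul
  calc mass d u * Ifun d J p ν ≤ mass d u * (ν / mass d u * _) :=
        mul_le_mul_of_nonneg_left hsmul hm.le
    _ = _ := by rw [← mul_assoc, mul_div_cancel₀ _ hm.ne']

lemma mass_mul_ifun_le (hJ : ∀ k, 0 ≤ J k) (hp : 1 ≤ p) (hν : 0 < ν) (hu : MemL2 d u)
    (hle : mass d u ≤ ν) : mass d u * Ifun d J p ν ≤ ν * energy d J p u := by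
  obtain hm | hm := (mass_nonneg u).eq_or_lt
  · rw [← hm, zero_mul, energy, ppot_eq_zero_of_mass_eq_zero hp hu hm.symm, mul_zero, sub_zero]
    have := pairing_nonneg hJ u
    positivity
  · refine (mass_mul_ifun_le_mul_sub hJ hp hν hu hm).trans ?_
    gcongr
    refine sub_le_self _ (mul_nonneg (div_nonneg ?_ (by linarith)) (ppot_nonneg u))
    exact sub_nonneg.2 (Real.one_le_rpow ((one_le_div hm).2 hle) (by linarith))

lemma mass_mul_ifun_lt (hJ : ∀ k, 0 ≤ J k) (hp : 1 < p) (hu : MemL2 d u) (hm : 0 < mass d u)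
    (hlt : mass d u < ν) : mass d u * Ifun d J p ν < ν * energy d J p u := by
  have hν := hm.trans hlt
  refine (mass_mul_ifun_le_mul_sub hJ hp.le hν hu hm).trans_lt ?_
  gcongr
  refine sub_lt_self _ (mul_pos (div_pos ?_ (by linarith)) (ppot_pos hp.le hu hm))
  exact sub_pos.2 (Real.one_lt_rpow ((one_lt_div hm).2 hlt) (by linarith))

end EnergyInfimum

section Threshold

variable {d : ℕ} {J : ℕ → ℝ} {p ν : ℝ}

lemma gnineq_iff_ifun_nonneg (hJ : ∀ k, 0 ≤ J k) (hp : 1 ≤ p) (hν : 0 < ν) :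
    GNineq d J p ν ↔ 0 ≤ Ifun d J p ν := by
  have hp₁ : 0 < p + 1 := by linarith
  refine ⟨fun hGN => Real.sInf_nonneg ?_, fun hI q hq => ?_⟩
  · rintro - ⟨q, hq, rfl, rfl⟩
    have hq' := hGN q hq
    rw [neg_div, mul_assoc (_ / 2), ← Real.rpow_add hν, neg_add_cancel, Real.rpow_zero,
      mul_one] at hq'
    rw [energy, sub_nonneg, one_div (p + 1), inv_mul_le_iff₀ hp₁]
    linarith
  · obtain hm | hm := (mass_nonneg q).eq_or_lt
    · rw [ppot_eq_zero_of_mass_eq_zero hp hq hm.symm]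
      have := mass_nonneg q
      have := pairing_nonneg hJ q
      positivity
    · set t := (ν / mass d q) ^ ((p - 1) / 2) with ht
      have ht₀ : 0 < t := by positivity
      have hscaled : t * ppot d p q ≤ (p + 1) / 2 * pairing d J q := by
        have hnonneg := nonneg_of_mul_nonneg_right
          ((mul_nonneg hm.le hI).trans (mass_mul_ifun_le_mul_sub hJ hp hν hq hm)) hν
        have hsplit : energy d J p q - (t - 1) / (p + 1) * ppot d p q =
            ((p + 1) / 2 * pairing d J q - t * ppot d p q) / (p + 1) := by
          rw [energy]
          field_simp
          ring
        rwa [← ht, hsplit, le_div_iff₀ hp₁, zero_mul, sub_nonneg] at hnonneg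
      have hconst : ν ^ (-(p - 1) / 2) * mass d q ^ ((p - 1) / 2) = t⁻¹ := by
        rw [ht, ← Real.inv_rpow (by positivity), inv_div, Real.div_rpow hm.le hν.le, neg_div,
          Real.rpow_neg hν.le, inv_mul_eq_div]
      rw [mul_assoc (_ / 2), hconst, mul_right_comm, ← div_eq_mul_inv, le_div_iff₀' ht₀]
      exact hscaled

lemma eventually_not_gnineq (hp : 1 < p) : ∀ᶠ ν in atTop, ¬ GNineq d J p ν := by
  have hδ : MemL2 d (Pi.single 0 1) := summable_of_ne_finset_zero (s := {0}) fun n hn => by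
    simp [Pi.single_eq_of_ne (Finset.notMem_singleton.1 hn)]
  have hppot := ppot_pos hp.le hδ (mass_pos (n := 0) hδ (by simp))
  have hlim : Tendsto (fun ν : ℝ => (p + 1) / 2 * ν ^ (-(p - 1) / 2) *
      mass d (Pi.single 0 1) ^ ((p - 1) / 2) * pairing d J (Pi.single 0 1)) atTop (𝓝 0) := by
    have hpow : Tendsto (fun ν : ℝ => ν ^ (-(p - 1) / 2)) atTop (𝓝 0) := by
      rw [neg_div]
      exact tendsto_rpow_neg_atTop (by linarith)
    simpa using ((hpow.const_mul ((p + 1) / 2)).mul_const _).mul_const _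
  filter_upwards [hlim.eventually (gt_mem_nhds hppot)] with ν hν hGN
  exact (hGN _ hδ).not_gt hν

lemma not_gnineq_of_nuZero_lt (hp : 1 < p) (hν : nuZero d J p < ν) : ¬ GNineq d J p ν := by
  obtain ⟨b, hb⟩ := eventually_atTop.1 (eventually_not_gnineq (d := d) (J := J) hp)
  have hbdd : BddAbove {ν : ℝ | 0 < ν ∧ GNineq d J p ν} :=
    ⟨b, fun ν hν => le_of_not_ge fun hbν => hb ν hbν hν.2⟩
  have hsup {x : ℝ} (hx : x ∈ insert 0 {ν : ℝ | 0 < ν ∧ GNineq d J p ν}) : x ≤ nuZero d J p :=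
    le_csSup (hbdd.insert 0) hx
  have hν₀ : 0 < ν := (hsup (Set.mem_insert _ _)).trans_lt hν
  exact fun hGN => (hsup (Set.mem_insert_of_mem _ ⟨hν₀, hGN⟩)).not_gt hν

lemma exists_gnineq_of_lt_nuZero (hν : 0 ≤ ν) (hlt : ν < nuZero d J p) :
    ∃ ν' > ν, GNineq d J p ν' := by
  obtain ⟨ν', rfl | ⟨-, hGN⟩, hν'⟩ := exists_lt_of_lt_csSup (Set.insert_nonempty _ _) hlt
  exacts [absurd hν' hν.not_gt, ⟨ν', hν', hGN⟩]

lemma nuZero_nonneg : 0 ≤ nuZero d J p :=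
  Real.sSup_nonneg <| Set.forall_mem_insert.2 ⟨le_rfl, fun _ h => h.1.le⟩

lemma ifun_neg_of_nuZero_lt (hJ : ∀ k, 0 ≤ J k) (hp : 1 < p) (hlt : nuZero d J p < ν) :
    Ifun d J p ν < 0 :=
  have hν := nuZero_nonneg.trans_lt hlt
  not_le.1 <| (gnineq_iff_ifun_nonneg hJ hp.le hν).not.1 (not_gnineq_of_nuZero_lt hp hlt)

lemma energy_pos_of_mass_lt_nuZero (hJ : ∀ k, 0 ≤ J k) (hp : 1 < p) {q : (Fin d → ℤ) → ℂ}
    (hq : MemL2 d q) (hm : 0 < mass d q) (hlt : mass d q < nuZero d J p) :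
    0 < energy d J p q := by
  obtain ⟨ν', hν', hGN⟩ := exists_gnineq_of_lt_nuZero hm.le hlt
  have hpos : 0 < ν' := hm.trans hν'
  have hI := (gnineq_iff_ifun_nonneg hJ hp.le hpos).1 hGN
  exact pos_of_mul_pos_right ((mul_nonneg hm.le hI).trans_lt (mass_mul_ifun_lt hJ hp hq hm hν'))
    hpos.le

end Threshold

section TrialFunctions

lemma summable_prod_apply {ι β : Type*} [Fintype ι] {f : β → ℝ} (hf₀ : ∀ b, 0 ≤ f b)
    (hf : Summable f) : Summable fun x : ι → β => ∏ i, f (x i) := by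
  classical
  refine summable_of_sum_le (c := (∑' b, f b) ^ Fintype.card ι)
    (fun x => Finset.prod_nonneg fun i _ => hf₀ _) fun S => ?_
  set T : Finset β := S.biUnion fun x => Finset.univ.image x
  have hST : S ⊆ Fintype.piFinset fun _ => T := fun x hx =>
    Fintype.mem_piFinset.2 fun i =>
      Finset.mem_biUnion.2 ⟨x, hx, Finset.mem_image_of_mem _ (Finset.mem_univ i)⟩
  calc ∑ x ∈ S, ∏ i, f (x i) ≤ ∑ x ∈ Fintype.piFinset fun _ : ι => T, ∏ i, f (x i) :=
        Finset.sum_le_sum_of_subset_of_nonneg hST fun x _ _ => Finset.prod_nonneg fun i _ => hf₀ _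
    _ = (∑ b ∈ T, f b) ^ Fintype.card ι := by
      rw [← Finset.prod_univ_sum, Finset.prod_const, Finset.card_univ]
    _ ≤ (∑' b, f b) ^ Fintype.card ι :=
      pow_le_pow_left₀ (Finset.sum_nonneg fun b _ => hf₀ b)
        (hf.sum_le_tsum _ fun b _ => hf₀ b) _

/-- The `ℓ¹` norm of a lattice point. Unlike the `ℓ^∞` norm it makes `r ^ l1Norm n` a product over
the coordinates, which reduces its summability to the one-dimensional geometric series. -/
def l1Norm {ι : Type*} [Fintype ι] (n : ι → ℤ) : ℕ := ∑ i, (n i).natAbs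

lemma l1Norm_neg {ι : Type*} [Fintype ι] (n : ι → ℤ) : l1Norm (-n) = l1Norm n := by
  simp only [l1Norm, Pi.neg_apply, Int.natAbs_neg]

lemma l1Norm_le_add_sub {ι : Type*} [Fintype ι] (n m : ι → ℤ) :
    l1Norm n ≤ l1Norm m + l1Norm (n - m) := by
  simp only [l1Norm, ← Finset.sum_add_distrib, Pi.sub_apply]
  gcongr with i
  omega

lemma summable_pow_l1Norm {ι : Type*} [Fintype ι] {r : ℝ} (h₀ : 0 ≤ r) (h₁ : r < 1) :
    Summable fun n : ι → ℤ => r ^ l1Norm n := by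
  have hgeom : Summable fun k : ℤ => r ^ k.natAbs := by
    apply Summable.of_nat_of_neg <;> simpa using summable_geometric_of_lt_one h₀ h₁
  simpa only [l1Norm, Finset.prod_pow_eq_pow_sum] using
    summable_prod_apply (fun k => by positivity) hgeom

variable {d : ℕ} {J : ℕ → ℝ} {p ν r : ℝ}

lemma norm_ofReal_pow_l1Norm_sq (r : ℝ) (n : Fin d → ℤ) :
    ‖((r ^ l1Norm n : ℝ) : ℂ)‖ ^ 2 = (r ^ 2) ^ l1Norm n := by
  rw [Complex.norm_real, Real.norm_eq_abs, sq_abs, pow_right_comm]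

lemma memL2_pow_l1Norm (h₀ : 0 ≤ r) (h₁ : r < 1) :
    MemL2 d fun n => ((r ^ l1Norm n : ℝ) : ℂ) := by
  simpa only [MemL2, norm_ofReal_pow_l1Norm_sq] using
    summable_pow_l1Norm (sq_nonneg r) (pow_lt_one₀ h₀ h₁ two_ne_zero)

lemma norm_jbarSummand_mul_one_sub_pow_sq_le (hJ : ∀ k, 0 ≤ J k) (h₀ : 0 ≤ r) (h₁ : r ≤ 1)
    (k : Fin d → ℤ) : ‖JbarSummand d J k * (1 - r ^ l1Norm k) ^ 2‖ ≤ JbarSummand d J k := by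
  have hle : (1 - r ^ l1Norm k) ^ 2 ≤ 1 :=
    pow_le_one₀ (sub_nonneg.2 (pow_le_one₀ h₀ h₁)) (sub_le_self _ (by positivity))
  have hJk := jbarSummand_nonneg hJ k
  rw [Real.norm_of_nonneg (by positivity)]
  exact mul_le_of_le_one_right hJk hle

lemma tendsto_tsum_jbarSummand_mul_one_sub_pow_sq (hJ : ∀ k, 0 ≤ J k)
    (hJbar : Summable (JbarSummand d J)) :
    Tendsto (fun r : ℝ => ∑' k, JbarSummand d J k * (1 - r ^ l1Norm k) ^ 2) (𝓝[<] 1) (𝓝 0) := by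
  have hlim : Tendsto (fun r : ℝ => ∑' k, JbarSummand d J k * (1 - r ^ l1Norm k) ^ 2) (𝓝[<] 1)
      (𝓝 (∑' k, JbarSummand d J k * (1 - 1 ^ l1Norm k) ^ 2)) := by
    refine tendsto_tsum_of_dominated_convergence hJbar (fun k => ?_) ?_
    · exact (Continuous.tendsto (by fun_prop) 1).mono_left nhdsWithin_le_nhds
    · filter_upwards [Ioo_mem_nhdsLT zero_lt_one] with r hr k
      exact norm_jbarSummand_mul_one_sub_pow_sq_le hJ hr.1.le hr.2.le k
  simpa using hlim

lemma pairing_pow_l1Norm_le (hJ : ∀ k, 0 ≤ J k) (hJbar : Summable (JbarSummand d J)) (h₀ : 0 ≤ r)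
    (h₁ : r < 1) : pairing d J (fun n => ((r ^ l1Norm n : ℝ) : ℂ)) ≤
      (∑' k, JbarSummand d J k * (1 - r ^ l1Norm k) ^ 2) *
        mass d fun n => ((r ^ l1Norm n : ℝ) : ℂ) := by
  refine pairing_le_of_norm_sub_sq_le hJ hJbar (memL2_pow_l1Norm h₀ h₁)
    (.of_norm_bounded hJbar (norm_jbarSummand_mul_one_sub_pow_sq_le hJ h₀ h₁.le)) fun n m => ?_
  simp only [← Complex.ofReal_sub, Complex.norm_real, Real.norm_eq_abs, sq_abs]
  refine sq_sub_pow_le_mul_add h₀ h₁.le (l1Norm_le_add_sub n m) ?_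
  rw [← neg_sub, l1Norm_neg]
  exact l1Norm_le_add_sub m n

lemma exists_mass_eq_and_pairing_lt (hJ : ∀ k, 0 ≤ J k) (hJbar : Summable (JbarSummand d J))
    (hν : 0 < ν) {ε : ℝ} (hε : 0 < ε) : ∃ u, MemL2 d u ∧ mass d u = ν ∧ pairing d J u < ε := by
  have hmem : ∀ᶠ r : ℝ in 𝓝[<] 1, r ∈ Set.Ioo 0 1 := Ioo_mem_nhdsLT zero_lt_one
  obtain ⟨r, hr, hlt⟩ := (hmem.and ((tendsto_tsum_jbarSummand_mul_one_sub_pow_sq hJ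
    hJbar).eventually (gt_mem_nhds (div_pos hε hν)))).exists
  set v : (Fin d → ℤ) → ℂ := fun n => ((r ^ l1Norm n : ℝ) : ℂ)
  have hv : MemL2 d v := memL2_pow_l1Norm hr.1.le hr.2
  have hm : 0 < mass d v := mass_pos (n := 0) hv (by simp [v, l1Norm])
  have hc : √(ν / mass d v) ^ 2 = ν / mass d v := Real.sq_sqrt (by positivity)
  refine ⟨√(ν / mass d v) • v, hv.const_smul _, ?_, ?_⟩
  · rw [mass_smul, hc, div_mul_cancel₀ _ hm.ne']
  · rw [pairing_smul, hc]
    calc ν / mass d v * pairing d J v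
        ≤ ν / mass d v * ((∑' k, JbarSummand d J k * (1 - r ^ l1Norm k) ^ 2) * mass d v) := by
          gcongr
          exact pairing_pow_l1Norm_le hJ hJbar hr.1.le hr.2
      _ = ν * ∑' k, JbarSummand d J k * (1 - r ^ l1Norm k) ^ 2 := by field_simp
      _ < ε := (lt_div_iff₀' hν).1 hlt

lemma ifun_nonpos (hJ : ∀ k, 0 ≤ J k) (hJbar : Summable (JbarSummand d J)) (hp : 1 ≤ p)
    (hν : 0 < ν) : Ifun d J p ν ≤ 0 := by
  refine le_of_forall_pos_le_add fun ε hε => ?_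
  obtain ⟨u, hu, rfl, hlt⟩ := exists_mass_eq_and_pairing_lt hJ hJbar hν hε
  have hppot : 0 ≤ 1 / (p + 1) * ppot d p u :=
    mul_nonneg (one_div_nonneg.2 (by linarith)) (ppot_nonneg u)
  calc Ifun d J p (mass d u) ≤ energy d J p u := ifun_le_energy hJ hp hu
    _ ≤ 0 + ε := by rw [energy]; linarith

end TrialFunctions

section Minimizers

variable {κ : Type*} {l : Filter κ} {d : ℕ} {J : ℕ → ℝ} {p ν : ℝ} {u : κ → (Fin d → ℤ) → ℂ}
  {q : (Fin d → ℤ) → ℂ}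

lemma TendstoWeakly.weightedDiff (hJ : ∀ k, 0 ≤ J k) (hJbar : Summable (JbarSummand d J))
    (hu : TendstoWeakly u l q) :
    TendstoWeakly (fun k => weightedDiff d J (u k)) l (weightedDiff d J q) where
  summable_sq k := (summable_and_tsum_norm_weightedDiff_sq_le_mass hJ hJbar (hu.summable_sq k)).1
  bounded := by
    obtain ⟨B, hB⟩ := hu.bounded
    have hJbar₀ : 0 ≤ Jbar d J := tsum_nonneg (jbarSummand_nonneg hJ)
    refine ⟨4 * Jbar d J * B, fun k => ?_⟩
    refine (summable_and_tsum_norm_weightedDiff_sq_le_mass hJ hJbar (hu.summable_sq k)).2.trans ?_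
    gcongr
    exact hB k
  tendsto_apply x := ((hu.tendsto_apply x.1).sub (hu.tendsto_apply x.2)).const_smul _

lemma TendstoWeakly.tendsto_pairing_sub [l.NeBot] (hJ : ∀ k, 0 ≤ J k)
    (hJbar : Summable (JbarSummand d J)) (hu : TendstoWeakly u l q) :
    Tendsto (fun k => pairing d J (u k) - pairing d J fun n => u k n - q n) l
      (𝓝 (pairing d J q)) := by
  rw [pairing_eq_half_tsum hJ hJbar hu.summable_limit]
  refine ((hu.weightedDiff hJ hJbar).tendsto_tsum_norm_sq_sub.const_mul (1 / 2)).congr fun k => ?_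
  rw [pairing_eq_half_tsum hJ hJbar (hu.summable_sq k),
    pairing_eq_half_tsum hJ hJbar (hu.sub_limit.summable_sq k), mul_sub]
  simp only [weightedDiff_sub]

lemma TendstoWeakly.tendsto_ppot_sub [l.NeBot] (hp : 1 ≤ p) (hu : TendstoWeakly u l q) :
    Tendsto (fun k => ppot d p (u k) - ppot d p fun n => u k n - q n) l (𝓝 (ppot d p q)) := by
  obtain ⟨R, hr, hq⟩ := hu.exists_norm_le
  refine hu.tendsto_tsum_sub_tsum_sub (f := fun z => ‖z‖ ^ (p + 1))
    (C := ((p + 1) * 2 ^ (p + 1 - 1) + 1) * R ^ (p + 1 - 2))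
    (fun v hv => (summable_and_ppot_le_sqrt_mass hp hv).1) fun k n => ?_
  simpa using abs_norm_add_rpow_sub_sub_le (s := p + 1) (by linarith) (hr k n) (hq n)

lemma TendstoWeakly.tendsto_energy_sub [l.NeBot] (hJ : ∀ k, 0 ≤ J k)
    (hJbar : Summable (JbarSummand d J)) (hp : 1 ≤ p) (hu : TendstoWeakly u l q) :
    Tendsto (fun k => energy d J p (u k) - energy d J p fun n => u k n - q n) l
      (𝓝 (energy d J p q)) := by
  refine (((hu.tendsto_pairing_sub hJ hJbar).const_mul (1 / 2)).sub
    ((hu.tendsto_ppot_sub hp).const_mul (1 / (p + 1)))).congr fun k => ?_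
  simp only [energy]
  ring

lemma exists_lt_rpow_norm_of_energy_lt (hJ : ∀ k, 0 ≤ J k) (hp : -1 < p) (hq : MemL2 d q) {c : ℝ}
    (h : energy d J p q < -(c / (p + 1)) * mass d q) : ∃ n, c < ‖q n‖ ^ (p - 1) := by
  by_contra! hsmall
  exact (neg_mul_mass_le_energy hJ hp hq hsmall).not_gt h

/- A negative infimum is not the junk value `0`, so the set of energies is nonempty and bounded
below. -/
lemma exists_minimizing_seq (hI : Ifun d J p ν < 0) :
    ∃ u : ℕ → (Fin d → ℤ) → ℂ, (∀ k, MemL2 d (u k)) ∧ (∀ k, mass d (u k) = ν) ∧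
      Tendsto (fun k => energy d J p (u k)) atTop (𝓝 (Ifun d J p ν)) := by
  have hne : {x | ∃ q, MemL2 d q ∧ mass d q = ν ∧ energy d J p q = x}.Nonempty := by
    refine Set.nonempty_iff_ne_empty.2 fun hempty => hI.ne ?_
    rw [Ifun, hempty, Real.sInf_empty]
  have hbdd : BddBelow {x | ∃ q, MemL2 d q ∧ mass d q = ν ∧ energy d J p q = x} :=
    not_imp_comm.1 Real.sInf_of_not_bddBelow hI.ne
  obtain ⟨x, -, hx, hmem⟩ := exists_seq_tendsto_sInf hne hbdd
  choose u hu hm hen using hmem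
  exact ⟨u, hu, hm, by simpa only [hen, Ifun] using hx⟩

lemma exists_centered_minimizing_seq (hJ : ∀ k, 0 ≤ J k) (hp : -1 < p) (hν : 0 < ν)
    (hI : Ifun d J p ν < 0) :
    ∃ c > 0, ∃ u : ℕ → (Fin d → ℤ) → ℂ, (∀ k, MemL2 d (u k)) ∧ (∀ k, mass d (u k) = ν) ∧
      (∀ k, c < ‖u k 0‖ ^ (p - 1)) ∧
        Tendsto (fun k => energy d J p (u k)) atTop (𝓝 (Ifun d J p ν)) := by
  have hp₁ : 0 < p + 1 := by linarith
  obtain ⟨u, hu, hm, hen⟩ := exists_minimizing_seq hI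
  obtain ⟨N, hN⟩ := eventually_atTop.1 (hen.eventually (gt_mem_nhds (by linarith :
    Ifun d J p ν < Ifun d J p ν / 2)))
  set c := (p + 1) * (-Ifun d J p ν) / (2 * ν) with hc
  have hlevel : -(c / (p + 1)) * ν = Ifun d J p ν / 2 := by
    rw [hc]
    field_simp
  have hlarge (k : ℕ) : ∃ n, c < ‖u (k + N) n‖ ^ (p - 1) :=
    exists_lt_rpow_norm_of_energy_lt hJ hp (hu _) <| by
      rw [hm, hlevel]
      exact hN _ (Nat.le_add_left N k)
  choose a ha using hlarge
  refine ⟨c, div_pos (mul_pos hp₁ (neg_pos.2 hI)) (by linarith),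
    fun k n => u (k + N) (n + a k), fun k => (hu _).comp_add_right _, fun k => ?_, fun k => ?_, ?_⟩
  · rw [mass_comp_add_right, hm]
  · simpa only [zero_add] using ha k
  · simpa only [energy_comp_add_right] using (tendsto_add_atTop_iff_nat N).2 hen

lemma TendstoWeakly.mul_energy_le_mass_mul_ifun [l.NeBot] (hJ : ∀ k, 0 ≤ J k)
    (hJbar : Summable (JbarSummand d J)) (hp : 1 ≤ p) (hν : 0 < ν) (hu : TendstoWeakly u l q)
    (hm : ∀ k, mass d (u k) = ν) (hen : Tendsto (fun k => energy d J p (u k)) l (𝓝 (Ifun d J p ν)))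
    (hq : 0 < mass d q) : ν * energy d J p q ≤ mass d q * Ifun d J p ν := by
  have hmass : Tendsto (fun k => mass d fun n => u k n - q n) l (𝓝 (ν - mass d q)) := by
    refine (hu.tendsto_tsum_norm_sq_sub.const_sub ν).congr fun k => ?_
    rw [← hm k]
    exact sub_sub_cancel _ _
  have henergy : Tendsto (fun k => energy d J p fun n => u k n - q n) l
      (𝓝 (Ifun d J p ν - energy d J p q)) := by
    simpa only [sub_sub_cancel] using hen.sub (hu.tendsto_energy_sub hJ hJbar hp)
  have hle : (ν - mass d q) * Ifun d J p ν ≤ ν * (Ifun d J p ν - energy d J p q) := by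
    refine le_of_tendsto_of_tendsto (hmass.mul_const _) (henergy.const_mul ν) ?_
    filter_upwards [hmass.eventually (gt_mem_nhds (sub_lt_self ν hq))] with k hk
    exact mass_mul_ifun_le hJ hp hν (hu.sub_limit.summable_sq k) hk.le
  linarith

lemma exists_energy_eq_ifun (hJ : ∀ k, 0 ≤ J k) (hJbar : Summable (JbarSummand d J)) (hp : 1 < p)
    (hν : 0 < ν) (hI : Ifun d J p ν < 0) :
    ∃ q, MemL2 d q ∧ mass d q = ν ∧ energy d J p q = Ifun d J p ν := by
  obtain ⟨c, hc, v, hv, hm, hv₀, hen⟩ :=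
    exists_centered_minimizing_seq hJ (by linarith) hν hI
  obtain ⟨q, φ, hφ, hweak⟩ := exists_subseq_tendstoWeakly hv fun k => (hm k).le
  obtain ⟨hq, hqν⟩ := hweak.summable_limit_and_tsum_le fun k => (hm (φ k)).le
  have hq₀ : q 0 ≠ 0 := by
    have hlim := (hweak.tendsto_apply 0).norm.rpow_const (p := p - 1) (.inr (by linarith))
    intro hzero
    rw [hzero, norm_zero, Real.zero_rpow (by linarith)] at hlim
    exact hc.not_ge (ge_of_tendsto' hlim fun k => (hv₀ (φ k)).le)
  have hqm : 0 < mass d q := mass_pos hq hq₀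
  have hsplit := hweak.mul_energy_le_mass_mul_ifun hJ hJbar hp.le hν (fun k => hm (φ k))
    (hen.comp hφ.tendsto_atTop) hqm
  have hqν_eq : mass d q = ν :=
    hqν.eq_of_not_lt fun hlt => hsplit.not_gt (mass_mul_ifun_lt hJ hp hq hqm hlt)
  rw [hqν_eq] at hsplit
  exact ⟨q, hq, hqν_eq, (le_of_mul_le_mul_left hsplit hν).antisymm
    (hqν_eq ▸ ifun_le_energy hJ hp.le hq)⟩

end Minimizers

theorem stmt10_general (d : ℕ) (p : ℝ) (hp : 1 < p) (J : ℕ → ℝ) (hJpos : ∀ k, 0 ≤ J k)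
    (hJbar : Summable (JbarSummand d J)) :
    ∀ ν : ℝ,
      (nuZero d J p < ν →
        Ifun d J p ν < 0 ∧
          ∃ q : (Fin d → ℤ) → ℂ, MemL2 d q ∧ mass d q = ν ∧
            energy d J p q = Ifun d J p ν) ∧
      (0 < ν → ν < nuZero d J p →
        Ifun d J p ν = 0 ∧
          ¬ ∃ q : (Fin d → ℤ) → ℂ, MemL2 d q ∧ mass d q = ν ∧
            energy d J p q = 0) := by
  refine fun ν => ⟨fun hlt => ?_, fun hν hlt => ?_⟩
  · have hI := ifun_neg_of_nuZero_lt hJpos hp hlt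
    exact ⟨hI, exists_energy_eq_ifun hJpos hJbar hp (nuZero_nonneg.trans_lt hlt) hI⟩
  · have hpos {q : (Fin d → ℤ) → ℂ} (hq : MemL2 d q) (hm : mass d q = ν) : 0 < energy d J p q :=
      energy_pos_of_mass_lt_nuZero hJpos hp hq (hm ▸ hν) (hm ▸ hlt)
    refine ⟨(ifun_nonpos hJpos hJbar hp.le hν).antisymm (Real.sInf_nonneg ?_), ?_⟩
    · rintro - ⟨q, hq, hm, rfl⟩
      exact (hpos hq hm).le
    · rintro ⟨q, hq, hm, hzero⟩
      exact (hpos hq hm).ne' hzero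

theorem stmt10 (d : ℕ) (hd : 1 ≤ d) (p : ℝ) (hp : 1 < p) (J : ℕ → ℝ)
    (hJpos : ∀ k, 0 ≤ J k) (hJbar : Summable (JbarSummand d J)) (hJ1 : 0 < J 1)
    (α : ℝ≥0∞) (hα : 0 < α) (horder : JOrder d J α)
    (hpsup : 1 + 4 * alphaPrime α / d ≤ p)
    (hnu0 : 0 < nuZero d J p) :
    ∀ ν : ℝ,
      (nuZero d J p < ν →
        Ifun d J p ν < 0 ∧
          ∃ q : (Fin d → ℤ) → ℂ, MemL2 d q ∧ mass d q = ν ∧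
            energy d J p q = Ifun d J p ν) ∧
      (0 < ν → ν < nuZero d J p →
        Ifun d J p ν = 0 ∧
          ¬ ∃ q : (Fin d → ℤ) → ℂ, MemL2 d q ∧ mass d q = ν ∧
            energy d J p q = 0) :=
  stmt10_general d p hp J hJpos hJbar
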